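/- Let X ⊆ {0,1}^ℤ be a nonempty two-directional binary subshift. Then W(X) = {the constant configuration ⋯AAA⋯} if and only if X is periodic, i.e., there exists p ≥ 1 such that σ^p(x) = x for every x ∈ X. -/

import Mathlib

/-!
Word games (Salo–Törmä, "Playing with Subshifts").
The players' alphabet is `Bool`: player `A` is `false`, player `B` is `true`
(so that the order `A < B` is the order `false < true` on `Bool`).
-/

/-- Auxiliary function for the play of a finite ordered word game: the word built so far
is accumulated in the second argument, and at each step the player indicated by the
turn order picks the next letter as a function of the word built so far. -/
def playAux {S : Type*} (sA sB : List S → S) : List Bool → List S → List S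
  | [], w => w
  | b :: rest, w => playAux sA sB rest (w ++ [(if b then sB else sA) w])

/-- The play of the finite ordered word game with turn order `a`,
where `A` uses strategy `sA` and `B` uses strategy `sB`. -/
def play {S : Type*} (sA sB : List S → S) (a : List Bool) : List S :=
  playAux sA sB a []

/-- The winning set `W(X)` of a target set `X` of finite words: the set of turn orders
for which `A` has a winning strategy. -/
def Wset {S : Type*} (X : Set (List S)) : Set (List Bool) :=
  { a | ∃ sA : List S → S, ∀ sB : List S → S, play sA sB a ∈ X }

/-- The shift map on two-directional configurations. -/
def shiftZ {S : Type*} (x : ℤ → S) : ℤ → S := fun i => x (i + 1)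

/-- `occursZ w x` means that the finite word `w` occurs as a factor of the
two-directional configuration `x`. -/
def occursZ {S : Type*} (w : List S) (x : ℤ → S) : Prop :=
  ∃ i : ℤ, w = List.ofFn fun j : Fin w.length => x (i + j.val)

/-- The language `B(X)` of a set of two-directional configurations. -/
def langZ {S : Type*} (X : Set (ℤ → S)) : Set (List S) :=
  { w | ∃ x ∈ X, occursZ w x }

/-- The winning shift of a two-directional subshift `X`: all configurations in
`{A,B}^ℤ` whose every finite factor lies in the winning set `W(B(X))`. -/
def WShiftZ {S : Type*} (X : Set (ℤ → S)) : Set (ℤ → Bool) :=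
  { a | ∀ w : List Bool, occursZ w a → w ∈ Wset (langZ X) }

/-!
Call a word `w` of `B(X)` right special if at least two letters can follow it in `B(X)`.

In the game with target `B(X)` and a single turn of `B`, preceded by `m` turns of `A`, player `A`
wins exactly if she can steer the play to a word `w` of length `m` that may be followed by every
letter; over two letters this says that `w` is right special. Giving `B` some of the `m` earlier
turns only hurts `A`, so the winning shift is `{⋯AAA⋯}` if and only if, for some `m`, no word of
length `m` is right special.

If there is no such word of length `m`, then each window of length `m` determines the next one.
Windows being finite in number and each having a predecessor, sliding the window permutes them,
and the order of this permutation is a common period of all points of `X`. Conversely, if `p` is a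
period then the letter following a word of length `p` is the first letter of that word.
-/

section Factors

variable {S : Type*} {X : Set (ℤ → S)} {x : ℤ → S} {w : List S} {s : S}

/-- The factor `x_i x_{i+1} ⋯ x_{i+n-1}` of the configuration `x`. -/
def factorZ (x : ℤ → S) (i : ℤ) (n : ℕ) : List S :=
  List.ofFn fun j : Fin n => x (i + j.val)

@[simp]
theorem length_factorZ (x : ℤ → S) (i : ℤ) (n : ℕ) : (factorZ x i n).length = n :=
  List.length_ofFn

theorem factorZ_succ (x : ℤ → S) (i : ℤ) (n : ℕ) :
    factorZ x i (n + 1) = factorZ x i n ++ [x (i + n)] := by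
  simp [factorZ, -List.ofFn_succ, List.ofFn_succ_last]

theorem factorZ_succ' (x : ℤ → S) (i : ℤ) (n : ℕ) :
    factorZ x i (n + 1) = x i :: factorZ x (i + 1) n := by
  simp [factorZ, add_comm, add_left_comm]

theorem eq_of_getElem?_factorZ_eq_some {i : ℤ} {n k : ℕ} (h : (factorZ x i n)[k]? = some s) :
    x (i + k) = s := by
  obtain ⟨_, hk⟩ := List.getElem?_eq_some_iff.1 h
  simpa [factorZ] using hk

theorem occursZ_iff_exists_eq_factorZ : occursZ w x ↔ ∃ i n, w = factorZ x i n := by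
  constructor
  · rintro ⟨i, hi⟩
    exact ⟨i, w.length, hi⟩
  · rintro ⟨i, n, rfl⟩
    exact ⟨i, by rw [← factorZ, length_factorZ]⟩

theorem factorZ_mem_langZ (hx : x ∈ X) (i : ℤ) (n : ℕ) : factorZ x i n ∈ langZ X :=
  ⟨x, hx, occursZ_iff_exists_eq_factorZ.2 ⟨i, n, rfl⟩⟩

theorem append_singleton_mem_langZ_iff :
    w ++ [s] ∈ langZ X ↔ ∃ x ∈ X, ∃ i : ℤ, factorZ x i w.length = w ∧ x (i + w.length) = s := by
  refine exists_congr fun x => and_congr_right fun _ => exists_congr fun i => ?_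
  rw [← factorZ, List.length_append, List.length_singleton, factorZ_succ, eq_comm,
    List.append_singleton_inj]

theorem exists_append_singleton_mem_langZ (hw : w ∈ langZ X) : ∃ s, w ++ [s] ∈ langZ X := by
  obtain ⟨x, hx, i, hi⟩ := hw
  exact ⟨_, append_singleton_mem_langZ_iff.2 ⟨x, hx, i, hi.symm, rfl⟩⟩

theorem mem_langZ_of_prefix {u : List S} (hw : w ∈ langZ X) (huw : u <+: w) : u ∈ langZ X := by
  obtain ⟨v, rfl⟩ := huw
  induction v using List.reverseRecOn with
  | nil => simpa using hw
  | append_singleton v s ih =>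
    rw [← List.append_assoc, append_singleton_mem_langZ_iff] at hw
    obtain ⟨x, hx, i, hi, -⟩ := hw
    exact ih (hi ▸ factorZ_mem_langZ hx i _)

end Factors

section Games

variable {S : Type*} {L : Set (List S)} {a : List Bool}

theorem playAux_append (sA sB : List S → S) (a b : List Bool) (w : List S) :
    playAux sA sB (a ++ b) w = playAux sA sB b (playAux sA sB a w) := by
  induction a generalizing w with
  | nil => rfl
  | cons _ _ ih => exact ih _

theorem play_append_singleton (sA sB : List S → S) (a : List Bool) (b : Bool) :
    play sA sB (a ++ [b]) = play sA sB a ++ [(if b then sB else sA) (play sA sB a)] :=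
  playAux_append sA sB a [b] []

@[simp]
theorem length_play (sA sB : List S → S) (a : List Bool) : (play sA sB a).length = a.length := by
  induction a using List.reverseRecOn with
  | nil => rfl
  | append_singleton a b ih => simp [play_append_singleton, ih]

theorem play_congr_right {sA sB sB' : List S → S}
    (h : ∀ w : List S, w.length < a.length → sB w = sB' w) : play sA sB a = play sA sB' a := by
  induction a using List.reverseRecOn with
  | nil => rfl
  | append_singleton a b ih =>
    have hB : sB (play sA sB' a) = sB' (play sA sB' a) := h _ (by simp)
    have hplay : play sA sB a = play sA sB' a := ih fun w hw => h w (hw.trans (by simp))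
    cases b <;> simp [play_append_singleton, hplay, hB]

theorem exists_forall_append_mem_of_append_true_mem_Wset (ha : a ++ [true] ∈ Wset L) :
    ∃ w : List S, w.length = a.length ∧ ∀ s, w ++ [s] ∈ L := by
  obtain ⟨sA, hsA⟩ := ha
  let sB (s : S) (w : List S) : S := if w.length < a.length then sA w else s
  refine ⟨play sA sA a, length_play _ _ _, fun s => ?_⟩
  have hplay : play sA (sB s) a = play sA sA a := play_congr_right fun w hw => if_pos hw
  have hlast : sB s (play sA sA a) = s := if_neg (by simp)
  simpa [play_append_singleton, hplay, hlast] using hsA (sB s)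

theorem mem_Wset_of_safe [Nonempty S] {P : Set (List S)} (hPL : P ⊆ L) (hnil : [] ∈ P)
    (hA : ∀ w ∈ P, ∃ s, w ++ [s] ∈ P)
    (hB : ∀ w ∈ P, a[w.length]? = some true → ∀ s, w ++ [s] ∈ P) : a ∈ Wset L := by
  choose! sA hsA using hA
  refine ⟨sA, fun sB => hPL ?_⟩
  induction a using List.reverseRecOn with
  | nil => exact hnil
  | append_singleton a b ih =>
    have hplay : play sA sB a ∈ P := ih fun w hw hlt =>
      hB w hw (by rw [List.getElem?_append_left (List.getElem?_eq_some_iff.1 hlt).1, hlt])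
    rw [play_append_singleton]
    cases b with
    | false => exact hsA _ hplay
    | true => exact hB _ hplay (by simp) _

/- `A` keeps the play comparable with `w` for the prefix order: she spells out `w` and afterwards
stays in `L`. -/
theorem mem_Wset_of_forall_append_mem [Nonempty S] (hpre : ∀ u v, v ∈ L → u <+: v → u ∈ L)
    (hext : ∀ u ∈ L, ∃ s, u ++ [s] ∈ L) {w : List S} (hws : ∀ s, w ++ [s] ∈ L)
    (hturn : ∀ k, a[k]? = some true → k = w.length) : a ∈ Wset L := by
  have hw : w ∈ L := hpre _ _ (hws (Classical.arbitrary S)) (w.prefix_append _)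
  refine mem_Wset_of_safe (P := {u ∈ L | u <+: w ∨ w <+: u}) (Set.sep_subset _ _)
    ⟨hpre _ _ hw w.nil_prefix, .inl w.nil_prefix⟩ ?_ ?_
  · rintro u ⟨hu, huw | hwu⟩
    · obtain ⟨v, rfl⟩ := huw
      cases v with
      | nil =>
        obtain ⟨s, hs⟩ := hext u hu
        exact ⟨s, hs, .inr (by simp)⟩
      | cons s v =>
        have hsw : u ++ [s] <+: u ++ s :: v := ⟨v, by simp⟩
        exact ⟨s, hpre _ _ hw hsw, .inl hsw⟩
    · obtain ⟨s, hs⟩ := hext u hu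
      exact ⟨s, hs, .inr (hwu.trans (u.prefix_append _))⟩
  · rintro u ⟨-, hcmp⟩ hu s
    have hlen : u.length = w.length := hturn _ hu
    obtain rfl : u = w :=
      hcmp.elim (·.eq_of_length hlen) fun h => (h.eq_of_length hlen.symm).symm
    exact ⟨hws s, .inr (u.prefix_append _)⟩

end Games

section WinningShift

variable {S : Type*} {X : Set (ℤ → S)}

theorem const_false_mem_WShiftZ (hne : X.Nonempty) : (fun _ => false) ∈ WShiftZ X := by
  intro a ha
  obtain ⟨i, n, rfl⟩ := occursZ_iff_exists_eq_factorZ.1 ha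
  obtain ⟨x, hx⟩ := hne
  have : Nonempty S := ⟨x 0⟩
  refine mem_Wset_of_safe subset_rfl (factorZ_mem_langZ hx 0 0)
    (fun _ => exists_append_singleton_mem_langZ) fun _ _ hk => ?_
  exact absurd (eq_of_getElem?_factorZ_eq_some hk) Bool.false_ne_true

theorem decide_eq_zero_mem_WShiftZ [Nonempty S]
    (h : ∀ m : ℕ, ∃ w : List S, w.length = m ∧ ∀ s, w ++ [s] ∈ langZ X) :
    (fun i : ℤ => decide (i = 0)) ∈ WShiftZ X := by
  intro a ha
  obtain ⟨i, n, rfl⟩ := occursZ_iff_exists_eq_factorZ.1 ha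
  obtain ⟨w, hlen, hw⟩ := h (-i).toNat
  refine mem_Wset_of_forall_append_mem (fun _ _ => mem_langZ_of_prefix)
    (fun _ => exists_append_singleton_mem_langZ) hw fun k hk => ?_
  have hzero : i + k = 0 := of_decide_eq_true (eq_of_getElem?_factorZ_eq_some hk)
  omega

theorem exists_forall_append_mem_of_mem_WShiftZ {a : ℤ → Bool} (ha : a ∈ WShiftZ X) {i : ℤ}
    (hi : a i = true) (m : ℕ) : ∃ w : List S, w.length = m ∧ ∀ s, w ++ [s] ∈ langZ X := by
  have hfactor : factorZ a (i - m) (m + 1) = factorZ a (i - m) m ++ [true] := by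
    rw [factorZ_succ, sub_add_cancel, hi]
  have hwin : factorZ a (i - m) m ++ [true] ∈ Wset (langZ X) :=
    ha _ (occursZ_iff_exists_eq_factorZ.2 ⟨i - m, m + 1, hfactor.symm⟩)
  simpa only [length_factorZ] using exists_forall_append_mem_of_append_true_mem_Wset hwin

theorem WShiftZ_eq_singleton_iff (hne : X.Nonempty) :
    WShiftZ X = {fun _ => false} ↔
      ∃ m : ℕ, ∀ w : List S, w.length = m → ¬ ∀ s, w ++ [s] ∈ langZ X := by
  constructor
  · intro hW
    by_contra! hall
    have : Nonempty S := hne.elim fun x _ => ⟨x 0⟩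
    have hmem := decide_eq_zero_mem_WShiftZ hall
    rw [hW, Set.mem_singleton_iff] at hmem
    simpa using congrFun hmem 0
  · rintro ⟨m, hm⟩
    refine Set.eq_singleton_iff_unique_mem.2 ⟨const_false_mem_WShiftZ hne, fun a ha => ?_⟩
    funext i
    by_contra hi
    obtain ⟨w, hlen, hw⟩ :=
      exists_forall_append_mem_of_mem_WShiftZ ha (Bool.eq_true_of_not_eq_false hi) m
    exact hm w hlen hw

end WinningShift

section Periodicity

variable {S : Type*}

/-- A word is right special in the language `L` if two different letters can follow it in `L`.
The word itself is not required to lie in `L`. -/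
def IsRightSpecial (L : Set (List S)) (w : List S) : Prop :=
  ∃ s t, s ≠ t ∧ w ++ [s] ∈ L ∧ w ++ [t] ∈ L

theorem isRightSpecial_iff_of_card_eq_two (hS : Nat.card S = 2) {L : Set (List S)} {w : List S} :
    IsRightSpecial L w ↔ ∀ s, w ++ [s] ∈ L := by
  constructor
  · rintro ⟨s, t, hst, hs, ht⟩ r
    obtain rfl | hrs := eq_or_ne r s
    · exact hs
    · rwa [((Nat.card_eq_two_iff' s).1 hS).unique hrs hst.symm]
  · intro h
    obtain ⟨s, t, hst, -⟩ := Nat.card_eq_two_iff.1 hS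
    exact ⟨s, t, hst, h s, h t⟩

theorem exists_iterate_eq_of_factorsThrough {ι α : Type*} {σ : ι → ι} {g : ι → α}
    (hσ : σ.Surjective) (hg : (Set.range g).Finite) (h : (g ∘ σ).FactorsThrough g) :
    ∃ p : ℕ, 1 ≤ p ∧ ∀ i, g (σ^[p] i) = g i := by
  let f : Quotient (Setoid.ker g) → Quotient (Setoid.ker g) := Quotient.map σ fun _ _ hij => h hij
  have hsemi : Function.Semiconj (Quotient.mk (Setoid.ker g)) σ f := fun _ => rfl
  have : Finite (Quotient (Setoid.ker g)) :=
    have := hg.to_subtype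
    .of_equiv _ (Setoid.quotientKerEquivRange g).symm
  have hf : f.Surjective := .of_comp (g := Quotient.mk (Setoid.ker g))
    (hsemi.comp_eq ▸ Quotient.mk_surjective.comp hσ)
  let e : Equiv.Perm (Quotient (Setoid.ker g)) := .ofBijective f hf.bijective_of_finite
  obtain ⟨p, hp, hep⟩ := (isOfFinOrder_of_finite e).exists_pow_eq_one
  have hfp : f^[p] = id := (e.iterate_eq_pow p).trans (congrArg _ hep)
  refine ⟨p, hp, fun i => Quotient.exact (s := Setoid.ker g) ?_⟩
  rw [(hsemi.iterate_right p).eq i, hfp, id]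

variable {X : Set (ℤ → S)}

theorem exists_periodic_of_forall_not_isRightSpecial [Finite S] {m : ℕ}
    (h : ∀ w, w.length = m → ¬ IsRightSpecial (langZ X) w) :
    ∃ p : ℕ, 1 ≤ p ∧ ∀ x ∈ X, Function.Periodic x (p : ℤ) := by
  have hnext {x y : ℤ → S} (hx : x ∈ X) (hy : y ∈ X) {i j : ℤ}
      (hxy : factorZ x i m = factorZ y j m) : x (i + m) = y (j + m) := by
    by_contra hne
    refine h (factorZ x i m) (length_factorZ x i m) ⟨_, _, hne, ?_, ?_⟩
    · rw [← factorZ_succ]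
      exact factorZ_mem_langZ hx i (m + 1)
    · rw [hxy, ← factorZ_succ]
      exact factorZ_mem_langZ hy j (m + 1)
  let window (q : X × ℤ) : List S := factorZ q.1 q.2 m
  have hfin : (Set.range window).Finite :=
    (List.finite_length_eq S m).subset (Set.range_subset_iff.2 fun q => length_factorZ _ _ _)
  have hdet : (window ∘ Prod.map id (· + 1)).FactorsThrough window := by
    intro q r hwindow
    have hqr : factorZ q.1 q.2 m = factorZ r.1.1 r.2 m := hwindow
    have hsucc : factorZ q.1 q.2 (m + 1) = factorZ r.1.1 r.2 (m + 1) := by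
      rw [factorZ_succ, factorZ_succ, hnext q.1.2 r.1.2 hqr, hqr]
    rw [factorZ_succ', factorZ_succ'] at hsucc
    exact (List.cons.inj hsucc).2
  have hsurj : (Prod.map id (· + 1) : X × ℤ → X × ℤ).Surjective :=
    Function.surjective_id.prodMap (add_right_surjective 1)
  obtain ⟨p, hp, hperiod⟩ := exists_iterate_eq_of_factorsThrough hsurj hfin hdet
  refine ⟨p, hp, fun x hx i => ?_⟩
  have hwindow : factorZ x (i - m + p) m = factorZ x (i - m) m := by
    simpa [window, Prod.map_iterate] using hperiod (⟨x, hx⟩, i - m)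
  simpa [add_right_comm] using hnext hx hx hwindow

theorem not_isRightSpecial_of_periodic {p : ℕ} (hp : 1 ≤ p)
    (hX : ∀ x ∈ X, Function.Periodic x (p : ℤ)) {w : List S} (hw : w.length = p) :
    ¬ IsRightSpecial (langZ X) w := by
  have hhead {s : S} (hs : w ++ [s] ∈ langZ X) : w.head? = some s := by
    obtain ⟨x, hx, i, hxw, rfl⟩ := append_singleton_mem_langZ_iff.1 hs
    obtain ⟨n, rfl⟩ := Nat.exists_eq_add_of_le' hp
    rw [hw] at hxw ⊢
    rw [hX x hx i, ← hxw, factorZ_succ', List.head?_cons]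
  rintro ⟨s, t, hst, hs, ht⟩
  exact hst (Option.some.inj ((hhead hs).symm.trans (hhead ht)))

theorem exists_periodic_iff_exists_forall_not_isRightSpecial [Finite S] :
    (∃ p : ℕ, 1 ≤ p ∧ ∀ x ∈ X, Function.Periodic x (p : ℤ)) ↔
      ∃ m : ℕ, ∀ w, w.length = m → ¬ IsRightSpecial (langZ X) w :=
  ⟨fun ⟨p, hp, hX⟩ => ⟨p, fun _ => not_isRightSpecial_of_periodic hp hX⟩,
    fun ⟨_, h⟩ => exists_periodic_of_forall_not_isRightSpecial h⟩

end Periodicity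

theorem winningShift_singleton_iff_periodic_general {S : Type*} (hS : Nat.card S = 2)
    {X : Set (ℤ → S)} (hne : X.Nonempty) :
    WShiftZ X = {fun _ => false} ↔
      ∃ p : ℕ, 1 ≤ p ∧ ∀ x ∈ X, (fun i => x (i + (p : ℤ))) = x := by
  have : Finite S := Nat.finite_of_card_ne_zero (by simp [hS])
  simp only [funext_iff]
  calc WShiftZ X = {fun _ => false}
    _ ↔ ∃ m : ℕ, ∀ w : List S, w.length = m → ¬ ∀ s, w ++ [s] ∈ langZ X :=
      WShiftZ_eq_singleton_iff hne
    _ ↔ ∃ m : ℕ, ∀ w : List S, w.length = m → ¬ IsRightSpecial (langZ X) w := by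
      simp only [isRightSpecial_iff_of_card_eq_two hS]
    _ ↔ ∃ p : ℕ, 1 ≤ p ∧ ∀ x ∈ X, Function.Periodic x (p : ℤ) :=
      exists_periodic_iff_exists_forall_not_isRightSpecial.symm

/-- A nonempty two-directional binary subshift `X ⊆ {0,1}^ℤ`
(letters `0`, `1` encoded as `false`, `true`) has winning shift equal to the single
all-`A` configuration if and only if `X` is periodic. -/
theorem winningShift_singleton_iff_periodic (X : Set (ℤ → Bool))
    (hne : X.Nonempty) (hXcl : IsClosed X) (hXsh : shiftZ '' X = X) :
    WShiftZ X = ({fun _ => false} : Set (ℤ → Bool)) ↔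
      ∃ p : ℕ, 1 ≤ p ∧ ∀ x ∈ X, (fun i => x (i + (p : ℤ))) = x :=
  winningShift_singleton_iff_periodic_general (by simp) hne
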